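/- The pullback map j from S⁴-configurations to ℂP̄²-configurations is well defined and intertwines the group actions: fix χ ∈ GL(k,ℂ) and define j(a₁, a₂, b, c) = (a₁χ⁻¹, a₂χ⁻¹, χ, b, cχ⁻¹). If (a₁,a₂,b,c) is an integrable and nondegenerate S⁴-configuration, then j(a₁,a₂,b,c) is an integrable and nondegenerate ℂP̄²-configuration, and for every g ∈ GL(k,ℂ) one has j(g·(a₁,a₂,b,c)) = (g, χgχ⁻¹)·j(a₁,a₂,b,c). -/

import Mathlib

open Matrix

/-- The monad map `A(x)` of an `S⁴`-configuration `(a₁, a₂, b, c)`. -/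
noncomputable def monadA {k n : ℕ} (a₁ a₂ : Matrix (Fin k) (Fin k) ℂ)
    (c : Matrix (Fin n) (Fin k) ℂ) (x : ℂ × ℂ × ℂ) :
    Matrix ((Fin k ⊕ Fin k) ⊕ Fin n) (Fin k) ℂ :=
  Matrix.fromRows
    (Matrix.fromRows (x.1 • (1 : Matrix (Fin k) (Fin k) ℂ) - x.2.2 • a₁)
      (x.2.1 • (1 : Matrix (Fin k) (Fin k) ℂ) - x.2.2 • a₂))
    (x.2.2 • c)

/-- The monad map `B(x)` of an `S⁴`-configuration `(a₁, a₂, b, c)`. -/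
noncomputable def monadB {k n : ℕ} (a₁ a₂ : Matrix (Fin k) (Fin k) ℂ)
    (b : Matrix (Fin k) (Fin n) ℂ) (x : ℂ × ℂ × ℂ) :
    Matrix (Fin k) ((Fin k ⊕ Fin k) ⊕ Fin n) ℂ :=
  Matrix.fromCols
    (Matrix.fromCols (-(x.2.1 • (1 : Matrix (Fin k) (Fin k) ℂ)) + x.2.2 • a₂)
      (x.1 • (1 : Matrix (Fin k) (Fin k) ℂ) - x.2.2 • a₁))
    (x.2.2 • b)

/-- The monad map `A(p,q)` of a `ℂP̄²`-configuration `(a₁, a₂, x, b, c)`. -/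
noncomputable def cpbarA {k n : ℕ} (a₁ a₂ x : Matrix (Fin k) (Fin k) ℂ)
    (c : Matrix (Fin n) (Fin k) ℂ) (p : ℂ × ℂ × ℂ) (q : ℂ × ℂ) :
    Matrix (((Fin k ⊕ Fin k) ⊕ (Fin k ⊕ Fin k)) ⊕ Fin n) (Fin k ⊕ Fin k) ℂ :=
  Matrix.fromCols
    (Matrix.fromRows
      (Matrix.fromRows
        (Matrix.fromRows (p.2.2 • a₁)
          (p.1 • (1 : Matrix (Fin k) (Fin k) ℂ) - p.2.2 • (x * a₁)))
        (Matrix.fromRows (p.2.2 • a₂)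
          (p.2.1 • (1 : Matrix (Fin k) (Fin k) ℂ) - p.2.2 • (x * a₂))))
      (p.2.2 • c))
    (Matrix.fromRows
      (Matrix.fromRows
        (Matrix.fromRows (-(q.2 • (1 : Matrix (Fin k) (Fin k) ℂ))) (0 : Matrix (Fin k) (Fin k) ℂ))
        (Matrix.fromRows (q.1 • (1 : Matrix (Fin k) (Fin k) ℂ)) (0 : Matrix (Fin k) (Fin k) ℂ)))
      (0 : Matrix (Fin n) (Fin k) ℂ))

/-- The monad map `B(p,q)` of a `ℂP̄²`-configuration `(a₁, a₂, x, b, c)`. -/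
noncomputable def cpbarB {k n : ℕ} (a₁ a₂ x : Matrix (Fin k) (Fin k) ℂ)
    (b : Matrix (Fin k) (Fin n) ℂ) (p : ℂ × ℂ × ℂ) (q : ℂ × ℂ) :
    Matrix (Fin k ⊕ Fin k) (((Fin k ⊕ Fin k) ⊕ (Fin k ⊕ Fin k)) ⊕ Fin n) ℂ :=
  Matrix.fromRows
    (Matrix.fromCols
      (Matrix.fromCols
        (Matrix.fromCols (p.2.1 • (1 : Matrix (Fin k) (Fin k) ℂ)) (p.2.2 • a₂))
        (Matrix.fromCols (-(p.1 • (1 : Matrix (Fin k) (Fin k) ℂ))) (-(p.2.2 • a₁))))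
      (p.2.2 • b))
    (Matrix.fromCols
      (Matrix.fromCols
        (Matrix.fromCols (q.1 • x) (q.1 • (1 : Matrix (Fin k) (Fin k) ℂ)))
        (Matrix.fromCols (q.2 • x) (q.2 • (1 : Matrix (Fin k) (Fin k) ℂ))))
      (0 : Matrix (Fin k) (Fin n) ℂ))

/-!
For a `ℂP̄²`-configuration `(a₁, a₂, x, b, c)`, the first block column of `A(p, q)` contains `A(p)`
for the `S⁴`-configuration `(x a₁, x a₂, x b, c)`, and a change of coordinates in the source of
`B(p, q)` makes it block triangular with diagonal blocks `B(p)` for `(a₁ x, a₂ x, b, c x)` and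
`(q₁ · 1, q₂ · 1)`. At the image `j(a₁, a₂, b, c)` the first of these `S⁴`-configurations is
`χ · (a₁, a₂, b, c)` and the second is `(a₁, a₂, b, c)`, so nondegeneracy is inherited as soon as
`q₁` and `q₂` generate the unit ideal.
-/

theorem isCoprime_fst_snd_of_ne_zero {K : Type*} [Semifield K] {q : K × K} (hq : q ≠ 0) :
    IsCoprime q.1 q.2 := by
  rwa [Semifield.isCoprime_iff, ← not_and_or, ← Prod.mk_eq_zero]

section MonadMaps

variable {R m n : Type*} [CommRing R] [DecidableEq m]

/-- The monad map `A(p)` of an `S⁴`-configuration over a commutative ring, generalizing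
`monadA`. -/
def s4MonadA (a₁ a₂ : Matrix m m R) (c : Matrix n m R) (p : R × R × R) :
    Matrix ((m ⊕ m) ⊕ n) m R :=
  fromRows (fromRows (p.1 • 1 - p.2.2 • a₁) (p.2.1 • 1 - p.2.2 • a₂)) (p.2.2 • c)

/-- The monad map `B(p)` of an `S⁴`-configuration over a commutative ring, generalizing
`monadB`. -/
def s4MonadB (a₁ a₂ : Matrix m m R) (b : Matrix m n R) (p : R × R × R) :
    Matrix m ((m ⊕ m) ⊕ n) R :=
  fromCols (fromCols (-(p.2.1 • 1) + p.2.2 • a₂) (p.1 • 1 - p.2.2 • a₁)) (p.2.2 • b)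

/-- The monad map `B(p, q)` of a `ℂP̄²`-configuration over a commutative ring, generalizing
`cpbarB`. -/
def cp2barMonadB (a₁ a₂ x : Matrix m m R) (b : Matrix m n R) (p : R × R × R) (q : R × R) :
    Matrix (m ⊕ m) (((m ⊕ m) ⊕ (m ⊕ m)) ⊕ n) R :=
  fromRows
    (fromCols
      (fromCols (fromCols (p.2.1 • 1) (p.2.2 • a₂)) (fromCols (-(p.1 • 1)) (-(p.2.2 • a₁))))
      (p.2.2 • b))
    (fromCols (fromCols (fromCols (q.1 • x) (q.1 • 1)) (fromCols (q.2 • x) (q.2 • 1))) 0)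

variable [Fintype m]

/-- The monad map `A(p, q)` of a `ℂP̄²`-configuration over a commutative ring, generalizing
`cpbarA`. -/
def cp2barMonadA (a₁ a₂ x : Matrix m m R) (c : Matrix n m R) (p : R × R × R) (q : R × R) :
    Matrix (((m ⊕ m) ⊕ (m ⊕ m)) ⊕ n) (m ⊕ m) R :=
  fromCols
    (fromRows
      (fromRows (fromRows (p.2.2 • a₁) (p.1 • 1 - p.2.2 • (x * a₁)))
        (fromRows (p.2.2 • a₂) (p.2.1 • 1 - p.2.2 • (x * a₂))))
      (p.2.2 • c))
    (fromRows (fromRows (fromRows (-(q.2 • 1)) 0) (fromRows (q.1 • 1) 0)) 0)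

theorem s4MonadA_mulVec_eq_zero_iff {a₁ a₂ : Matrix m m R} {c : Matrix n m R} {p : R × R × R}
    {u : m → R} :
    s4MonadA a₁ a₂ c p *ᵥ u = 0 ↔
      p.1 • u = p.2.2 • a₁ *ᵥ u ∧ p.2.1 • u = p.2.2 • a₂ *ᵥ u ∧ p.2.2 • c *ᵥ u = 0 := by
  simp only [s4MonadA, fromRows_mulVec, sub_mulVec, smul_mulVec, one_mulVec,
    ← Sum.elim_zero_zero, Sum.elim_eq_iff, sub_eq_zero, and_assoc]

theorem cp2barMonadA_mulVec_sumElim_eq_zero_iff {a₁ a₂ x : Matrix m m R} {c : Matrix n m R}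
    {p : R × R × R} {q : R × R} {u v : m → R} :
    cp2barMonadA a₁ a₂ x c p q *ᵥ Sum.elim u v = 0 ↔
      s4MonadA (x * a₁) (x * a₂) c p *ᵥ u = 0 ∧
        p.2.2 • a₁ *ᵥ u = q.2 • v ∧ p.2.2 • a₂ *ᵥ u = -(q.1 • v) := by
  simp only [cp2barMonadA, s4MonadA, fromCols_mulVec_sumElim, fromRows_mulVec,
    ← Sum.elim_add_add, neg_mulVec, smul_mulVec, one_mulVec, zero_mulVec, add_zero,
    ← Sum.elim_zero_zero, Sum.elim_eq_iff, ← sub_eq_add_neg, sub_eq_zero, eq_neg_iff_add_eq_zero]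
  tauto

theorem s4MonadB_mulVec_sumElim [Fintype n] (a₁ a₂ : Matrix m m R) (b : Matrix m n R)
    (p : R × R × R) (w₁ w₂ : m → R) (w₃ : n → R) :
    s4MonadB a₁ a₂ b p *ᵥ Sum.elim (Sum.elim w₁ w₂) w₃ =
      -(p.2.1 • w₁) + p.2.2 • a₂ *ᵥ w₁ + (p.1 • w₂ - p.2.2 • a₁ *ᵥ w₂) + p.2.2 • b *ᵥ w₃ := by
  simp only [s4MonadB, fromCols_mulVec_sumElim, add_mulVec, sub_mulVec, neg_mulVec, smul_mulVec,
    one_mulVec]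

theorem cp2barMonadB_mulVec_sumElim [Fintype n] (a₁ a₂ x : Matrix m m R) (b : Matrix m n R)
    (p : R × R × R) (q : R × R) (w₁ w₂ t₁ t₂ : m → R) (w₃ : n → R) :
    cp2barMonadB a₁ a₂ x b p q *ᵥ
        Sum.elim (Sum.elim (Sum.elim (-w₁) (x *ᵥ w₁ + t₁)) (Sum.elim (-w₂) (x *ᵥ w₂ + t₂))) w₃ =
      Sum.elim
        (s4MonadB (a₁ * x) (a₂ * x) b p *ᵥ Sum.elim (Sum.elim w₁ w₂) w₃ +
          p.2.2 • (a₂ *ᵥ t₁ - a₁ *ᵥ t₂))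
        (q.1 • t₁ + q.2 • t₂) := by
  simp only [cp2barMonadB, s4MonadB_mulVec_sumElim, fromCols_mulVec_sumElim, fromRows_mulVec,
    neg_mulVec, smul_mulVec, one_mulVec, zero_mulVec, mulVec_add, mulVec_neg, ← mulVec_mulVec,
    Sum.elim_eq_iff]
  constructor <;> module

theorem mulVec_cp2barMonadA_injective {a₁ a₂ x : Matrix m m R} {c : Matrix n m R}
    {p : R × R × R} {q : R × R} (hq : IsCoprime q.1 q.2)
    (h : Function.Injective (s4MonadA (x * a₁) (x * a₂) c p).mulVec) :
    Function.Injective (cp2barMonadA a₁ a₂ x c p q).mulVec := by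
  refine (injective_iff_map_eq_zero (cp2barMonadA a₁ a₂ x c p q).mulVecLin).2 fun z hz ↦ ?_
  obtain ⟨u, v, rfl⟩ : ∃ u v, z = Sum.elim u v := ⟨_, _, (Sum.elim_comp_inl_inr z).symm⟩
  obtain ⟨hu, hv₂, hv₁⟩ := cp2barMonadA_mulVec_sumElim_eq_zero_iff.1 hz
  obtain rfl : u = 0 := h (hu.trans (mulVec_zero _).symm)
  replace hv₂ : q.2 • v = 0 := by simpa using hv₂.symm
  replace hv₁ : q.1 • v = 0 := by simpa using hv₁.symm
  obtain ⟨α, β, hαβ⟩ := hq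
  have hv : v = 0 := calc
    v = (α * q.1 + β * q.2) • v := by rw [hαβ, one_smul]
    _ = 0 := by rw [add_smul, mul_smul, mul_smul, hv₁, hv₂, smul_zero, smul_zero, add_zero]
  rw [hv, Sum.elim_zero_zero]

theorem mulVec_cp2barMonadB_surjective [Fintype n] {a₁ a₂ x : Matrix m m R} {b : Matrix m n R}
    {p : R × R × R} {q : R × R} (hq : IsCoprime q.1 q.2)
    (h : Function.Surjective (s4MonadB (a₁ * x) (a₂ * x) b p).mulVec) :
    Function.Surjective (cp2barMonadB a₁ a₂ x b p q).mulVec := by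
  intro z
  obtain ⟨s, t, rfl⟩ : ∃ s t, z = Sum.elim s t := ⟨_, _, (Sum.elim_comp_inl_inr z).symm⟩
  obtain ⟨α, β, hαβ⟩ := hq
  have ht : q.1 • α • t + q.2 • β • t = t := by
    rw [smul_smul, smul_smul, ← add_smul, mul_comm, mul_comm q.2, hαβ, one_smul]
  obtain ⟨w, hw⟩ := h (s - p.2.2 • (a₂ *ᵥ α • t - a₁ *ᵥ β • t))
  obtain ⟨w₁, w₂, w₃, rfl⟩ : ∃ w₁ w₂ w₃, w = Sum.elim (Sum.elim w₁ w₂) w₃ :=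
    ⟨(w ∘ Sum.inl) ∘ Sum.inl, (w ∘ Sum.inl) ∘ Sum.inr, w ∘ Sum.inr, by
      simp only [Sum.elim_comp_inl_inr]⟩
  exact ⟨_, by rw [cp2barMonadB_mulVec_sumElim, hw, sub_add_cancel, ht]⟩

theorem mulVec_s4MonadA_conj_injective {a₁ a₂ g : Matrix m m R} {c : Matrix n m R}
    {p : R × R × R} (hg : IsUnit g.det) (h : Function.Injective (s4MonadA a₁ a₂ c p).mulVec) :
    Function.Injective (s4MonadA (g * a₁ * g⁻¹) (g * a₂ * g⁻¹) (c * g⁻¹) p).mulVec := by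
  refine (injective_iff_map_eq_zero (s4MonadA _ _ _ p).mulVecLin).2 fun u hu ↦ ?_
  have hinv (a : Matrix m m R) : g⁻¹ *ᵥ (g * a * g⁻¹) *ᵥ u = a *ᵥ g⁻¹ *ᵥ u := by
    simp only [mulVec_mulVec, Matrix.mul_assoc, nonsing_inv_mul_cancel_left _ _ hg]
  obtain ⟨h₁, h₂, h₃⟩ := s4MonadA_mulVec_eq_zero_iff.1 hu
  have hgu : g⁻¹ *ᵥ u = 0 := by
    refine h ((s4MonadA_mulVec_eq_zero_iff.2 ⟨?_, ?_, ?_⟩).trans (mulVec_zero _).symm)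
    · rw [← mulVec_smul, h₁, mulVec_smul, hinv]
    · rw [← mulVec_smul, h₂, mulVec_smul, hinv]
    · rwa [mulVec_mulVec]
  rw [← one_mulVec u, ← mul_nonsing_inv g hg, ← mulVec_mulVec, hgu, mulVec_zero]

end MonadMaps

section Pullback

variable {R m n : Type*} [CommRing R] [Fintype m] [DecidableEq m]

theorem pullback_integrable [Fintype n] {χ a₁ a₂ : Matrix m m R} {b : Matrix m n R}
    {c : Matrix n m R} (hχ : IsUnit χ.det) (h : a₁ * a₂ - a₂ * a₁ + b * c = 0) :
    a₁ * χ⁻¹ * χ * (a₂ * χ⁻¹) - a₂ * χ⁻¹ * χ * (a₁ * χ⁻¹) + b * (c * χ⁻¹) = 0 := calc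
  _ = (a₁ * a₂ - a₂ * a₁ + b * c) * χ⁻¹ := by
    simp only [nonsing_inv_mul_cancel_right _ _ hχ, Matrix.add_mul, Matrix.sub_mul,
      Matrix.mul_assoc]
  _ = 0 := by rw [h, Matrix.zero_mul]

theorem mul_inv_mul_inv_eq_mul_conj_inv {χ : Matrix m m R} (hχ : IsUnit χ.det)
    (c : Matrix n m R) (g : Matrix m m R) : c * g⁻¹ * χ⁻¹ = c * χ⁻¹ * (χ * g * χ⁻¹)⁻¹ := by
  simp only [Matrix.mul_inv_rev, nonsing_inv_nonsing_inv χ hχ, Matrix.mul_assoc,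
    nonsing_inv_mul_cancel_left _ _ hχ]

theorem conj_mul_mul_inv_cancel {χ g : Matrix m m R} (hχ : IsUnit χ.det)
    (hg : IsUnit g.det) : χ * g * χ⁻¹ * χ * g⁻¹ = χ := by
  rw [nonsing_inv_mul_cancel_right _ _ hχ, mul_nonsing_inv_cancel_right _ _ hg]

theorem pullback_map_well_defined_intertwines_general [Fintype n]
    (χ : Matrix m m R) (hχ : IsUnit χ) (a₁ a₂ : Matrix m m R) (b : Matrix m n R)
    (c : Matrix n m R) :
    (a₁ * a₂ - a₂ * a₁ + b * c = 0 →
      a₁ * χ⁻¹ * χ * (a₂ * χ⁻¹) - a₂ * χ⁻¹ * χ * (a₁ * χ⁻¹) + b * (c * χ⁻¹) = 0) ∧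
    (∀ (p : R × R × R) (q : R × R), IsCoprime q.1 q.2 →
      (Function.Injective (s4MonadA a₁ a₂ c p).mulVec →
        Function.Injective (cp2barMonadA (a₁ * χ⁻¹) (a₂ * χ⁻¹) χ (c * χ⁻¹) p q).mulVec) ∧
      (Function.Surjective (s4MonadB a₁ a₂ b p).mulVec →
        Function.Surjective (cp2barMonadB (a₁ * χ⁻¹) (a₂ * χ⁻¹) χ b p q).mulVec)) ∧
    (∀ g : Matrix m m R, IsUnit g →
      (g * a₁ * g⁻¹ * χ⁻¹, g * a₂ * g⁻¹ * χ⁻¹, χ, g * b, c * g⁻¹ * χ⁻¹) =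
      (g * (a₁ * χ⁻¹) * (χ * g * χ⁻¹)⁻¹, g * (a₂ * χ⁻¹) * (χ * g * χ⁻¹)⁻¹,
        χ * g * χ⁻¹ * χ * g⁻¹, g * b, c * χ⁻¹ * (χ * g * χ⁻¹)⁻¹)) := by
  rw [isUnit_iff_isUnit_det] at hχ
  refine ⟨pullback_integrable hχ, fun p q hq ↦ ⟨fun hA ↦ ?_, fun hB ↦ ?_⟩, fun g hg ↦ ?_⟩
  · apply mulVec_cp2barMonadA_injective hq
    simpa only [Matrix.mul_assoc] using mulVec_s4MonadA_conj_injective hχ hA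
  · apply mulVec_cp2barMonadB_surjective hq
    simpa only [nonsing_inv_mul_cancel_right _ _ hχ] using hB
  · rw [isUnit_iff_isUnit_det] at hg
    simp only [← Matrix.mul_assoc, ← mul_inv_mul_inv_eq_mul_conj_inv hχ,
      conj_mul_mul_inv_cancel hχ hg]

end Pullback

/-- The pullback map `j(a₁,a₂,b,c) = (a₁χ⁻¹, a₂χ⁻¹, χ, b, cχ⁻¹)` sends integrable
nondegenerate `S⁴`-configurations to integrable nondegenerate `ℂP̄²`-configurations,
and intertwines the `GL(k,ℂ)`-action with the `GL(k,ℂ)×GL(k,ℂ)`-action via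
`g ↦ (g, χgχ⁻¹)`. -/
theorem pullback_map_well_defined_intertwines {k n : ℕ}
    (χ : Matrix (Fin k) (Fin k) ℂ) (hχ : IsUnit χ)
    (a₁ a₂ : Matrix (Fin k) (Fin k) ℂ)
    (b : Matrix (Fin k) (Fin n) ℂ) (c : Matrix (Fin n) (Fin k) ℂ)
    (hint : a₁ * a₂ - a₂ * a₁ + b * c = 0)
    (hnd : ∀ x : ℂ × ℂ × ℂ, x ≠ 0 →
      Function.Injective (monadA a₁ a₂ c x).mulVec ∧
      Function.Surjective (monadB a₁ a₂ b x).mulVec) :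
    ((a₁ * χ⁻¹) * χ * (a₂ * χ⁻¹) - (a₂ * χ⁻¹) * χ * (a₁ * χ⁻¹) + b * (c * χ⁻¹) = 0) ∧
    (∀ (p : ℂ × ℂ × ℂ) (q : ℂ × ℂ), p ≠ 0 → q ≠ 0 →
      p.1 * q.1 + p.2.1 * q.2 = 0 →
      Function.Injective (cpbarA (a₁ * χ⁻¹) (a₂ * χ⁻¹) χ (c * χ⁻¹) p q).mulVec ∧
      Function.Surjective (cpbarB (a₁ * χ⁻¹) (a₂ * χ⁻¹) χ b p q).mulVec) ∧
    (∀ g : Matrix (Fin k) (Fin k) ℂ, IsUnit g →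
      (((g * a₁ * g⁻¹) * χ⁻¹, (g * a₂ * g⁻¹) * χ⁻¹, χ, g * b, (c * g⁻¹) * χ⁻¹) :
        Matrix (Fin k) (Fin k) ℂ × Matrix (Fin k) (Fin k) ℂ × Matrix (Fin k) (Fin k) ℂ ×
          Matrix (Fin k) (Fin n) ℂ × Matrix (Fin n) (Fin k) ℂ) =
      (g * (a₁ * χ⁻¹) * (χ * g * χ⁻¹)⁻¹, g * (a₂ * χ⁻¹) * (χ * g * χ⁻¹)⁻¹,
        (χ * g * χ⁻¹) * χ * g⁻¹, g * b, (c * χ⁻¹) * (χ * g * χ⁻¹)⁻¹)) := by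
  obtain ⟨h_int, h_nondeg, h_equiv⟩ := pullback_map_well_defined_intertwines_general χ hχ a₁ a₂ b c
  exact ⟨h_int hint, fun p q hp hq _ ↦ (h_nondeg p q (isCoprime_fst_snd_of_ne_zero hq)).imp
    (· (hnd p hp).1) (· (hnd p hp).2), h_equiv⟩
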